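/- Let F : ℝ^m → ℝ be L-smooth, set L' = L + 1, and let (z_k) be generated by z_{k+1} = z_k + t_k s_k with ‖g_k − ∇F(z_k)‖₂ ≤ δ_k, c₁‖g_k‖₂² ≤ −g_kᵀ s_k, and ‖s_k‖₂ ≤ c₂‖g_k‖₂ with c₁, c₂ > 0. Fix c̃ ∈ (0, c₁). Then for every index k such that t_k ≤ 2(c₁ − c̃)/(c₂² L'), one has F(z_{k+1}) ≤ F(z_k) − c̃ t_k ‖g_k‖₂² + δ_k²/2. -/

import Mathlib

open scoped RealInnerProductSpace

lemma descent_aux {m : ℕ} (F : EuclideanSpace ℝ (Fin m) → ℝ) (L : ℝ)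
    (hdiff : Differentiable ℝ F)
    (hlip : ∀ x y : EuclideanSpace ℝ (Fin m), ‖gradient F x - gradient F y‖ ≤ L * ‖x - y‖)
    (x d : EuclideanSpace ℝ (Fin m)) :
    F (x + d) ≤ F x + ⟪gradient F x, d⟫ + L / 2 * ‖d‖ ^ 2 := by
  have hder : ∀ u : ℝ, HasDerivAt
      (fun u : ℝ => F (x + u • d) - u * ⟪gradient F x, d⟫ - L / 2 * ‖d‖ ^ 2 * u ^ 2)
      (⟪gradient F (x + u • d), d⟫ - ⟪gradient F x, d⟫ - L * ‖d‖ ^ 2 * u) u := by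
    intro u
    have h1 : HasDerivAt (fun u : ℝ => x + u • d) d u := by
      simpa using ((hasDerivAt_id u).smul_const d).const_add x
    have h2 := (hdiff (x + u • d)).hasGradientAt.hasFDerivAt.comp_hasDerivAt u h1
    have h3 := (h2.sub ((hasDerivAt_id u).mul_const ⟪gradient F x, d⟫)).sub
      (((hasDerivAt_id u).pow 2).const_mul (L / 2 * ‖d‖ ^ 2))
    refine h3.congr_deriv ?_
    simp
    ring
  have hanti : AntitoneOn
      (fun u : ℝ => F (x + u • d) - u * ⟪gradient F x, d⟫ - L / 2 * ‖d‖ ^ 2 * u ^ 2)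
      (Set.Ici 0) := by
    apply antitoneOn_of_deriv_nonpos (convex_Ici 0)
    · exact fun u _ => (hder u).continuousAt.continuousWithinAt
    · exact fun u _ => (hder u).differentiableAt.differentiableWithinAt
    · intro u hu
      rw [interior_Ici] at hu
      have hu : 0 < u := hu
      rw [(hder u).deriv, ← inner_sub_left]
      have h1 := real_inner_le_norm (gradient F (x + u • d) - gradient F x) d
      have h2 := hlip (x + u • d) x
      rw [add_sub_cancel_left, norm_smul, Real.norm_of_nonneg hu.le] at h2
      have h3 := mul_le_mul_of_nonneg_right h2 (norm_nonneg d)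
      nlinarith
  have h := hanti (Set.mem_Ici.2 le_rfl) (Set.mem_Ici.2 zero_le_one) zero_le_one
  simp only [one_smul, zero_smul, add_zero] at h
  linarith

/-- descent inequality when the step size is small enough. -/
theorem stmt_10 (m : ℕ) (F : EuclideanSpace ℝ (Fin m) → ℝ) (L L' : ℝ)
    (hdiff : Differentiable ℝ F)
    (hlip : ∀ x y : EuclideanSpace ℝ (Fin m), ‖gradient F x - gradient F y‖ ≤ L * ‖x - y‖)
    (hL' : L' = L + 1)
    (z s g : ℕ → EuclideanSpace ℝ (Fin m)) (t δ : ℕ → ℝ)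
    (c₁ c₂ : ℝ) (hc₁ : 0 < c₁) (hc₂ : 0 < c₂)
    (ht : ∀ k, 0 < t k) (hδ : ∀ k, 0 ≤ δ k)
    (hupd : ∀ k, z (k + 1) = z k + t k • s k)
    (herr : ∀ k, ‖g k - gradient F (z k)‖ ≤ δ k)
    (hdesc : ∀ k, c₁ * ‖g k‖ ^ 2 ≤ -⟪g k, s k⟫)
    (hbnd : ∀ k, ‖s k‖ ≤ c₂ * ‖g k‖)
    (c : ℝ) (hc0 : 0 < c) (hcc₁ : c < c₁) :
    ∀ k, t k ≤ 2 * (c₁ - c) / (c₂ ^ 2 * L') →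
      F (z (k + 1)) ≤ F (z k) - c * t k * ‖g k‖ ^ 2 + (δ k) ^ 2 / 2 := by
  intro k hk
  by_cases hs : s k = 0
  · have h1 := hdesc k
    rw [hs, inner_zero_right, neg_zero] at h1
    have h2 : ‖g k‖ ^ 2 = 0 := by
      have := sq_nonneg ‖g k‖
      nlinarith
    rw [hupd, hs, smul_zero, add_zero, h2]
    have := sq_nonneg (δ k)
    linarith
  · have hL : 0 ≤ L := by
      have h1 := (norm_nonneg _).trans (hlip (s k) 0)
      rw [sub_zero] at h1
      exact nonneg_of_mul_nonneg_left h1 (norm_pos_iff.2 hs)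
    have hLp : 0 < L' := by linarith
    have htk := ht k
    rw [le_div_iff₀ (by positivity)] at hk
    have h1 := descent_aux F L hdiff hlip (z k) (t k • s k)
    rw [← hupd, inner_smul_right, norm_smul, Real.norm_of_nonneg htk.le] at h1
    have h2 := real_inner_le_norm (gradient F (z k) - g k) (s k)
    rw [inner_sub_left, norm_sub_rev] at h2
    have h3 : t k * ⟪gradient F (z k), s k⟫ ≤
        t k * (⟪g k, s k⟫ + δ k * ‖s k‖) := by
      have := mul_le_mul_of_nonneg_right (herr k) (norm_nonneg (s k))
      exact mul_le_mul_of_nonneg_left (by linarith) htk.le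
    have h4 : t k * ⟪g k, s k⟫ ≤ t k * (-(c₁ * ‖g k‖ ^ 2)) :=
      mul_le_mul_of_nonneg_left (by linarith [hdesc k]) htk.le
    have h5 := sq_nonneg (δ k - t k * ‖s k‖)
    have h6 : ‖s k‖ ^ 2 ≤ (c₂ * ‖g k‖) ^ 2 :=
      pow_le_pow_left₀ (norm_nonneg _) (hbnd k) 2
    have h7 : L' / 2 * t k ^ 2 * ‖s k‖ ^ 2 ≤ L' / 2 * t k ^ 2 * (c₂ * ‖g k‖) ^ 2 :=
      mul_le_mul_of_nonneg_left h6 (by positivity)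
    have h8 := mul_le_mul_of_nonneg_right hk
      (show 0 ≤ t k * ‖g k‖ ^ 2 / 2 by positivity)
    subst hL'
    linarith
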